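/- arXiv:1710.01380 — 2 statements merged into one kernel-verified Lean document; each statement's English description precedes it below -/
import Mathlib

section
/- Let M_A, M_B, M be monoids, let M_A act on a type N_A, M_B act on a type N_B, and M act faithfully on a type C. Let j : N_A → N_B → C be such that every element of C is of the form j(a,b) for some a ∈ N_A, b ∈ N_B, and let p : M_A → M_B → M satisfy p(U,V) • j(a,b) = j(U • a, V • b) for all U, V, a, b. Then for all U₁, U₂ ∈ M_A and V₁, V₂ ∈ M_B: p(U₂,V₂) * p(U₁,V₁) = p(U₂*U₁, V₂*V₁). -/
/-- `(U₂ × V₂)(U₁ × V₁) = (U₂U₁) × (V₂V₁)` for the product of operations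
defined via the join product, when the action on the composite system is
faithful. -/
theorem product_of_operations_mul
    {M_A M_B M N_A N_B C : Type*}
    [Monoid M_A] [Monoid M_B] [Monoid M]
    [MulAction M_A N_A] [MulAction M_B N_B] [MulAction M C]
    (hfaith : ∀ m₁ m₂ : M, (∀ c : C, m₁ • c = m₂ • c) → m₁ = m₂)
    (j : N_A → N_B → C)
    (hsurj : ∀ c : C, ∃ (a : N_A) (b : N_B), j a b = c)
    (p : M_A → M_B → M)
    (hp : ∀ (U : M_A) (V : M_B) (a : N_A) (b : N_B),
      p U V • j a b = j (U • a) (V • b)) :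
    ∀ (U₁ U₂ : M_A) (V₁ V₂ : M_B),
      p U₂ V₂ * p U₁ V₁ = p (U₂ * U₁) (V₂ * V₁) := by
  intro U₁ U₂ V₁ V₂
  refine hfaith _ _ fun c => ?_
  obtain ⟨a, b, rfl⟩ := hsurj c
  rw [mul_smul, hp, hp, hp, mul_smul, mul_smul]
end

section
/- Let N, P, N_A, P_A be types, with φ : N → P surjective, φ_A : N_A → P_A, p_N : N → N_A, p_P : P → P_A, and self-maps F : N → N, G : P → P, u : N_A → N_A, u' : P_A → P_A. Assume: (1) φ ∘ F = G ∘ φ; (2) p_P ∘ φ = φ_A ∘ p_N; (3) p_N ∘ F = u ∘ p_N; (4) φ_A ∘ u = u' ∘ φ_A. Then p_P ∘ G = u' ∘ p_P. -/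
/-- The No-Signalling Principle for local-realistic structures:
`π_A((U×V)(ρ^{AB})) = U(ρ^A)` at the phenomenal level follows from the
corresponding noumenal commutation relations and the surjectivity of the
noumenal-phenomenal epimorphism. -/
theorem no_signalling_principle
    {N P N_A P_A : Type*}
    (φ : N → P) (hφ : Function.Surjective φ)
    (φA : N_A → P_A) (pN : N → N_A) (pP : P → P_A)
    (F : N → N) (G : P → P) (u : N_A → N_A) (u' : P_A → P_A)
    (h1 : φ ∘ F = G ∘ φ)
    (h2 : pP ∘ φ = φA ∘ pN)
    (h3 : pN ∘ F = u ∘ pN)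
    (h4 : φA ∘ u = u' ∘ φA) :
    pP ∘ G = u' ∘ pP := by
  -- `φ` is an epimorphism, so it suffices to compare the two maps after precomposing with `φ`.
  apply hφ.injective_comp_right
  calc (pP ∘ G) ∘ φ = pP ∘ (φ ∘ F) := by rw [h1, Function.comp_assoc]
    _ = φA ∘ (pN ∘ F) := by rw [← Function.comp_assoc, h2, Function.comp_assoc]
    _ = (u' ∘ φA) ∘ pN := by rw [h3, ← Function.comp_assoc, h4]
    _ = (u' ∘ pP) ∘ φ := by rw [Function.comp_assoc, ← h2, Function.comp_assoc]
end
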